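/- arXiv:1912.07528 — 2 statements merged into one kernel-verified Lean document; each statement's English description precedes it below -/
import Mathlib

section
/- (Claim 3) Let a ∈ {1,...,K−1} and suppose q_a < 1 < q_{a+1}. Then the LP objective at the intersection point p(a,a+1) strictly exceeds its value at the corner point e_a (the point with y_a = 1 and all other coordinates zero): f(p(a,a+1)) > f(e_a) = a/(a+1). -/
/-- Transmission cost per placement of a type-`t` subfile: `c_t = ρ·t^α`. -/
noncomputable def cCost (ρ α : ℝ) (t : ℕ) : ℝ := ρ * (t : ℝ) ^ α

/-- `q_t = (N·c_t·(t+1) + t·(K+1)) / (K·(t+1))`. -/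
noncomputable def q (K N : ℕ) (ρ α : ℝ) (t : ℕ) : ℝ :=
  ((N : ℝ) * cCost ρ α t * ((t : ℝ) + 1) + (t : ℝ) * ((K : ℝ) + 1)) /
    ((K : ℝ) * ((t : ℝ) + 1))

/-- Feasibility for the caching LP: `Σ_{t=1}^K q_t·y_t ≤ 1`, `Σ_{t=1}^K y_t ≤ 1`,
and `y_t ≥ 0` for all `t ∈ {1,…,K}`. -/
def Feasible (K N : ℕ) (ρ α : ℝ) (y : ℕ → ℝ) : Prop :=
  (∑ t ∈ Finset.Icc 1 K, q K N ρ α t * y t ≤ 1) ∧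
  (∑ t ∈ Finset.Icc 1 K, y t ≤ 1) ∧
  (∀ t ∈ Finset.Icc 1 K, 0 ≤ y t)

/-- The caching LP objective `f(y) = Σ_{t=1}^K (t/(t+1))·y_t`. -/
noncomputable def objF (K : ℕ) (y : ℕ → ℝ) : ℝ :=
  ∑ t ∈ Finset.Icc 1 K, ((t : ℝ) / ((t : ℝ) + 1)) * y t

/-- The intersection point `p(i,j)`: `y_i = (q_j − 1)/(q_j − q_i)`,
`y_j = (1 − q_i)/(q_j − q_i)`, and `y_t = 0` otherwise. -/
noncomputable def pInter (K N : ℕ) (ρ α : ℝ) (i j : ℕ) : ℕ → ℝ := fun t =>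
  if t = i then (q K N ρ α j - 1) / (q K N ρ α j - q K N ρ α i)
  else if t = j then (1 - q K N ρ α i) / (q K N ρ α j - q K N ρ α i)
  else 0

/-- The `i`-th standard basis vector of `ℝ^K` (as a function on `ℕ`). -/
noncomputable def eVec (i : ℕ) : ℕ → ℝ := fun t => if t = i then 1 else 0

theorem objF_eVec {K i : ℕ} (hi : i ∈ Finset.Icc 1 K) :
    objF K (eVec i) = (i : ℝ) / ((i : ℝ) + 1) := by
  simp only [objF, eVec, mul_ite, mul_one, mul_zero, Finset.sum_ite_eq', if_pos hi]

theorem objF_pInter {K i j : ℕ} (N : ℕ) (ρ α : ℝ) (hi : i ∈ Finset.Icc 1 K)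
    (hj : j ∈ Finset.Icc 1 K) (hij : i ≠ j) :
    objF K (pInter K N ρ α i j) =
      (i : ℝ) / ((i : ℝ) + 1) * ((q K N ρ α j - 1) / (q K N ρ α j - q K N ρ α i)) +
      (j : ℝ) / ((j : ℝ) + 1) * ((1 - q K N ρ α i) / (q K N ρ α j - q K N ρ α i)) := by
  rw [objF, Finset.sum_eq_add_of_mem i j hi hj hij]
  · simp [pInter, hij.symm]
  · rintro t - ⟨hti, htj⟩
    simp [pInter, hti, htj]

theorem claim3_intersection_beats_corner
    (K N : ℕ) (hK : 2 ≤ K) (hKN : K ≤ N) (α ρ : ℝ)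
    (hα0 : 0 ≤ α) (hα1 : α ≤ 1) (hρ0 : 0 ≤ ρ) (hρ1 : ρ ≤ 1)
    (a : ℕ) (ha : 1 ≤ a) (haK : a + 1 ≤ K)
    (hqa : q K N ρ α a < 1) (hqb : 1 < q K N ρ α (a + 1)) :
    objF K (eVec a) < objF K (pInter K N ρ α a (a + 1)) ∧
    objF K (eVec a) = (a : ℝ) / ((a : ℝ) + 1) := by
  have hi : a ∈ Finset.Icc 1 K := Finset.mem_Icc.2 ⟨ha, by omega⟩
  have hj : a + 1 ∈ Finset.Icc 1 K := Finset.mem_Icc.2 ⟨by omega, haK⟩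
  refine ⟨?_, objF_eVec hi⟩
  rw [objF_eVec hi, objF_pInter N ρ α hi hj (by omega)]
  have hd : 0 < q K N ρ α (a + 1) - q K N ρ α a := by linarith
  have hw : (q K N ρ α (a + 1) - 1) / (q K N ρ α (a + 1) - q K N ρ α a) =
      1 - (1 - q K N ρ α a) / (q K N ρ α (a + 1) - q K N ρ α a) := by
    field_simp
    ring
  have hpos : 0 < (1 - q K N ρ α a) / (q K N ρ α (a + 1) - q K N ρ α a) :=
    div_pos (by linarith) hd
  have hlt : (a : ℝ) / ((a : ℝ) + 1) < ((a + 1 : ℕ) : ℝ) / (((a + 1 : ℕ) : ℝ) + 1) := by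
    push_cast
    rw [div_lt_div_iff₀ (by positivity) (by positivity)]
    nlinarith
  rw [hw]
  linarith [mul_lt_mul_of_pos_right hlt hpos]
end

section
/- (Architecture limited regime optimality, intersection case) Let a ∈ {1,...,K−1} and suppose γ_{a+1} < ρ ≤ γ_a (equivalently q_a ≤ 1 < q_{a+1}) and α ≥ σ_a. Then the intersection point p(a,a+1), with coordinates y_a = (q_{a+1} − 1)/(q_{a+1} − q_a), y_{a+1} = (1 − q_a)/(q_{a+1} − q_a), and all other coordinates zero, is an optimal solution of the caching LP. -/
/-- `γ_t = (K−t)/(t^α·(t+1)·N)`. -/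
noncomputable def gam (K N : ℕ) (α : ℝ) (t : ℕ) : ℝ :=
  ((K : ℝ) - (t : ℝ)) / ((t : ℝ) ^ α * ((t : ℝ) + 1) * (N : ℝ))

/-- `σ_t = 1 + log((t+1)/(t+2)) / log((t+1)/t)` for `1 ≤ t ≤ K−1`, with the
conventions `σ_0 = 1` and `σ_K = 0`. -/
noncomputable def sigmaK (K t : ℕ) : ℝ :=
  if t = 0 then 1
  else if t = K then 0
  else 1 + Real.log (((t : ℝ) + 1) / ((t : ℝ) + 2)) / Real.log (((t : ℝ) + 1) / (t : ℝ))

/-- The log-odds function is convex to the right of `1/2`. -/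
lemma convexOn_log_sub_log_one_sub :
    ConvexOn ℝ (Set.Ico (1 / 2 : ℝ) 1) (fun w => Real.log w - Real.log (1 - w)) := by
  have hderiv : ∀ w ∈ Set.Ico (1 / 2 : ℝ) 1,
      HasDerivAt (fun w => Real.log w - Real.log (1 - w)) (1 / (w * (1 - w))) w := by
    rintro w ⟨h1, h2⟩
    have hw : w ≠ 0 := by linarith
    have hw' : 1 - w ≠ 0 := by linarith
    have heq : 1 / (w * (1 - w)) = w⁻¹ - -1 / (1 - w) := by
      field_simp
      ring
    rw [heq]
    exact (Real.hasDerivAt_log hw).sub (((hasDerivAt_id w).const_sub 1).log hw')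
  refine MonotoneOn.convexOn_of_deriv (convex_Ico _ _)
    (fun w hw => (hderiv w hw).continuousAt.continuousWithinAt)
    (fun w hw => (hderiv w (interior_subset hw)).differentiableAt.differentiableWithinAt) ?_
  intro x hx y hy hxy
  have hx' := interior_subset hx
  have hy' := interior_subset hy
  rw [(hderiv x hx').deriv, (hderiv y hy').deriv]
  obtain ⟨hx1, hx2⟩ := hx'
  obtain ⟨hy1, hy2⟩ := hy'
  apply one_div_le_one_div_of_le
  · exact mul_pos (by linarith) (by linarith)
  · nlinarith

/-- For `α ≥ 0`, the `α`-th power of the odds `w / (1 - w)` is convex to the right of `1/2`. -/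
lemma convexOn_exp_mul_logOdds {α : ℝ} (hα : 0 ≤ α) :
    ConvexOn ℝ (Set.Ico (1 / 2 : ℝ) 1)
      (fun w => Real.exp (α * (Real.log w - Real.log (1 - w)))) := by
  refine ⟨convex_Ico _ _, fun x hx y hy c d hc hd hcd => ?_⟩
  have h := (convexOn_log_sub_log_one_sub.smul hα).2 hx hy hc hd hcd
  have h' := convexOn_exp.2 (Set.mem_univ (α * (Real.log x - Real.log (1 - x))))
    (Set.mem_univ (α * (Real.log y - Real.log (1 - y)))) hc hd hcd
  exact (Real.exp_le_exp.2 h).trans h'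

/-- A convex function lies above a chord outside of the chord's endpoints. -/
lemma ConvexOn.chord_le_of_outside {s : Set ℝ} {f : ℝ → ℝ} (hf : ConvexOn ℝ s f) {x y z : ℝ}
    (hx : x ∈ s) (hy : y ∈ s) (hz : z ∈ s) (hxy : x < y) (hout : z ≤ x ∨ y ≤ z) :
    (f y - f x) * (z - x) ≤ (f z - f x) * (y - x) := by
  rcases hout with h | h
  · rcases h.eq_or_lt with rfl | h
    · simp
    · have := hf.slope_mono_adjacent hz hy h hxy
      rw [div_le_div_iff₀ (by linarith) (by linarith)] at this
      linarith
  · rcases h.eq_or_lt with rfl | h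
    · simp
    · have := hf.slope_mono_adjacent hx hz hxy h
      rw [div_le_div_iff₀ (by linarith) (by linarith)] at this
      linarith

lemma rpow_eq_exp_logOdds (α : ℝ) {t : ℝ} (ht : 0 < t) :
    Real.exp (α * (Real.log (t / (t + 1)) - Real.log (1 - t / (t + 1)))) = t ^ α := by
  have h : 1 - t / (t + 1) = 1 / (t + 1) := by field_simp; ring
  rw [h, Real.log_div (by positivity) (by positivity),
    Real.log_div (by positivity) (by positivity), Real.rpow_def_of_pos ht, Real.log_one]
  ring_nf

lemma div_add_one_lt_div_add_one {s t : ℝ} (hs : 0 < s) (hst : s < t) :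
    s / (s + 1) < t / (t + 1) := by
  rw [div_lt_div_iff₀ (by linarith) (by linarith)]
  linarith

/-- Chord inequality for `t ^ α` as a function of `t / (t + 1)`, at integer points. -/
lemma rpow_chord_le {α : ℝ} (hα : 0 ≤ α) {a t : ℕ} (ha : 1 ≤ a) (ht : 1 ≤ t) :
    (((a : ℝ) + 1) ^ α - (a : ℝ) ^ α) * ((t : ℝ) / (t + 1) - (a : ℝ) / (a + 1)) ≤
      ((t : ℝ) ^ α - (a : ℝ) ^ α) *
        (((a : ℝ) + 1) / ((a : ℝ) + 1 + 1) - (a : ℝ) / (a + 1)) := by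
  have hmem : ∀ x : ℝ, 1 ≤ x → x / (x + 1) ∈ Set.Ico (1 / 2 : ℝ) 1 := by
    intro x hx
    constructor
    · rw [div_le_div_iff₀ (by norm_num) (by linarith)]
      linarith
    · rw [div_lt_one (by linarith)]
      linarith
  have ha' : (1 : ℝ) ≤ a := by exact_mod_cast ha
  have ht' : (1 : ℝ) ≤ t := by exact_mod_cast ht
  have hmono : ∀ x y : ℝ, 1 ≤ x → x ≤ y → x / (x + 1) ≤ y / (y + 1) := by
    intro x y hx hxy
    rw [div_le_div_iff₀ (by linarith) (by linarith)]
    linarith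
  have hout : (t : ℝ) / (t + 1) ≤ (a : ℝ) / (a + 1) ∨
      ((a : ℝ) + 1) / ((a : ℝ) + 1 + 1) ≤ (t : ℝ) / (t + 1) := by
    rcases le_or_gt t a with h | h
    · exact Or.inl (hmono _ _ ht' (by exact_mod_cast h))
    · exact Or.inr (hmono _ _ (by linarith) (by exact_mod_cast h))
  have h := (convexOn_exp_mul_logOdds hα).chord_le_of_outside (hmem a ha')
    (hmem (a + 1) (by linarith)) (hmem t ht')
    (div_add_one_lt_div_add_one (by linarith) (lt_add_one _)) hout
  simp only [rpow_eq_exp_logOdds α (show (0 : ℝ) < a by linarith),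
    rpow_eq_exp_logOdds α (show (0 : ℝ) < t by linarith),
    rpow_eq_exp_logOdds α (show (0 : ℝ) < (a : ℝ) + 1 by linarith)] at h
  exact h

/-- The threshold `σ_a ≤ α` in multiplicative form. -/
lemma mul_rpow_le_of_sigmaK_le {K a : ℕ} {α : ℝ} (ha : 1 ≤ a) (haK : a + 1 ≤ K)
    (hσ : sigmaK K a ≤ α) :
    ((a : ℝ) + 1) / ((a : ℝ) + 1 + 1) * (a : ℝ) ^ α ≤
      (a : ℝ) / (a + 1) * ((a : ℝ) + 1) ^ α := by
  have ha' : (0 : ℝ) < a := by exact_mod_cast ha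
  rw [sigmaK, if_neg (by omega), if_neg (by omega)] at hσ
  have hlog : 0 < Real.log (((a : ℝ) + 1) / a) :=
    Real.log_pos (by rw [lt_div_iff₀ ha']; linarith)
  have h := mul_le_mul_of_nonneg_right hσ hlog.le
  rw [add_mul, div_mul_cancel₀ _ hlog.ne', Real.log_div (by positivity) (by positivity),
    Real.log_div (by positivity) (by positivity)] at h
  rw [← Real.log_le_log_iff (by positivity) (by positivity),
    Real.log_mul (by positivity) (by positivity), Real.log_mul (by positivity) (by positivity),
    Real.log_div (by positivity) (by positivity), Real.log_div (by positivity) (by positivity),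
    Real.log_rpow (by positivity), Real.log_rpow (by positivity),
    show (a : ℝ) + 1 + 1 = a + 2 by ring]
  linarith

lemma q_eq (K N : ℕ) (ρ α : ℝ) (t : ℕ) :
    q K N ρ α t = (N : ℝ) * ρ / K * (t : ℝ) ^ α + ((K : ℝ) + 1) / K * ((t : ℝ) / (t + 1)) := by
  have ht : (t : ℝ) + 1 ≠ 0 := by positivity
  rcases eq_or_ne (K : ℝ) 0 with hK | hK
  · simp [q, hK]
  · rw [q, cCost]
    field_simp

lemma q_le_one_iff {K N : ℕ} {ρ α : ℝ} {t : ℕ} (hK : 0 < K) (hN : 0 < N) (ht : 0 < t) :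
    q K N ρ α t ≤ 1 ↔ ρ ≤ gam K N α t := by
  have hK' : (0 : ℝ) < K := by exact_mod_cast hK
  have hN' : (0 : ℝ) < N := by exact_mod_cast hN
  have ht' : (0 : ℝ) < t := by exact_mod_cast ht
  rw [q, gam, cCost, div_le_one (by positivity), le_div_iff₀ (by positivity)]
  constructor <;> intro h <;> linarith

/-- Sums against an intersection point reduce to its two supporting coordinates. -/
lemma sum_mul_pInter {K N : ℕ} {ρ α : ℝ} {i j : ℕ} (g : ℕ → ℝ) (hij : i ≠ j)
    (hi : i ∈ Finset.Icc 1 K) (hj : j ∈ Finset.Icc 1 K) :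
    ∑ t ∈ Finset.Icc 1 K, g t * pInter K N ρ α i j t =
      g i * ((q K N ρ α j - 1) / (q K N ρ α j - q K N ρ α i)) +
        g j * ((1 - q K N ρ α i) / (q K N ρ α j - q K N ρ α i)) := by
  have hsub : ({i, j} : Finset ℕ) ⊆ Finset.Icc 1 K := by
    intro t ht
    rcases Finset.mem_insert.1 ht with rfl | ht
    · exact hi
    · rwa [Finset.mem_singleton.1 ht]
  rw [← Finset.sum_subset hsub, Finset.sum_pair hij]
  · simp [pInter, hij.symm]
  · intro t _ ht
    simp only [Finset.mem_insert, Finset.mem_singleton, not_or] at ht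
    simp [pInter, ht.1, ht.2]

theorem architecture_limited_regime_intersection_optimal
    (K N : ℕ) (hK : 2 ≤ K) (hKN : K ≤ N) (α ρ : ℝ)
    (hα0 : 0 ≤ α) (hα1 : α ≤ 1) (hρ0 : 0 ≤ ρ) (hρ1 : ρ ≤ 1)
    (a : ℕ) (ha : 1 ≤ a) (haK : a + 1 ≤ K)
    (hγ₁ : gam K N α (a + 1) < ρ) (hγ₂ : ρ ≤ gam K N α a)
    (hσ : sigmaK K a ≤ α) :
    Feasible K N ρ α (pInter K N ρ α a (a + 1)) ∧
    (∀ z : ℕ → ℝ, Feasible K N ρ α z →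
      objF K z ≤ objF K (pInter K N ρ α a (a + 1))) := by
  have hqa : q K N ρ α a ≤ 1 := (q_le_one_iff (by omega) (by omega) (by omega)).2 hγ₂
  have hqb : 1 < q K N ρ α (a + 1) := by
    rw [← not_le, q_le_one_iff (by omega) (by omega) (by omega)]
    exact not_le.2 hγ₁
  have hD : 0 < q K N ρ α (a + 1) - q K N ρ α a := by linarith
  have hia : a ∈ Finset.Icc 1 K := Finset.mem_Icc.2 ⟨ha, by omega⟩
  have hib : a + 1 ∈ Finset.Icc 1 K := Finset.mem_Icc.2 ⟨by omega, haK⟩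
  have hsum := fun g : ℕ → ℝ =>
    sum_mul_pInter (N := N) (ρ := ρ) (α := α) g (Nat.lt_succ_self a).ne hia hib
  refine ⟨⟨?_, ?_, ?_⟩, ?_⟩
  · rw [hsum]
    apply le_of_eq
    field_simp
    ring
  · have h := hsum (fun _ => 1)
    simp only [one_mul] at h
    rw [h]
    apply le_of_eq
    field_simp
    ring
  · intro t _
    rw [pInter]
    split_ifs
    · exact div_nonneg (by linarith) hD.le
    · exact div_nonneg (by linarith) hD.le
    · exact le_rfl
  · rintro z ⟨hz1, hz2, hz0⟩
    have hKpos : (0 : ℝ) < K := by exact_mod_cast (show 0 < K by omega)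
    have ha' : (0 : ℝ) < a := by exact_mod_cast ha
    have hA : (0 : ℝ) ≤ (N : ℝ) * ρ / K := by positivity
    -- the optimal dual solution `(l, m)`
    obtain ⟨d, hd⟩ : ∃ d : ℝ, d = ((a : ℝ) + 1) / ((a : ℝ) + 1 + 1) - (a : ℝ) / (a + 1) :=
      ⟨_, rfl⟩
    have hd0 : 0 < d := by
      rw [hd]
      exact sub_pos.2 (div_add_one_lt_div_add_one ha' (lt_add_one _))
    obtain ⟨l, hl⟩ : ∃ l : ℝ, l = d / (q K N ρ α (a + 1) - q K N ρ α a) := ⟨_, rfl⟩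
    obtain ⟨m, hm⟩ : ∃ m : ℝ, m = (a : ℝ) / (a + 1) - l * q K N ρ α a := ⟨_, rfl⟩
    have hl0 : 0 ≤ l := hl ▸ (div_pos hd0 hD).le
    have hm0 : 0 ≤ m := by
      rw [hm, hl, sub_nonneg, div_mul_eq_mul_div, div_le_iff₀ hD, hd, q_eq, q_eq]
      push_cast
      linarith [mul_le_mul_of_nonneg_left (mul_rpow_le_of_sigmaK_le ha haK hσ) hA]
    have hdual : ∀ t ∈ Finset.Icc 1 K, (t : ℝ) / (t + 1) ≤ l * q K N ρ α t + m := by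
      intro t ht
      have hchord : ((t : ℝ) / (t + 1) - (a : ℝ) / (a + 1)) ≤
          l * (q K N ρ α t - q K N ρ α a) := by
        rw [hl, div_mul_eq_mul_div, le_div_iff₀ hD, hd, q_eq, q_eq, q_eq]
        push_cast
        linarith [mul_le_mul_of_nonneg_left
          (rpow_chord_le hα0 ha (Finset.mem_Icc.1 ht).1) hA]
      rw [hm]
      linarith
    calc objF K z ≤ ∑ t ∈ Finset.Icc 1 K, (l * q K N ρ α t + m) * z t :=
          Finset.sum_le_sum fun t ht => mul_le_mul_of_nonneg_right (hdual t ht) (hz0 t ht)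
      _ = l * ∑ t ∈ Finset.Icc 1 K, q K N ρ α t * z t + m * ∑ t ∈ Finset.Icc 1 K, z t := by
          rw [Finset.mul_sum, Finset.mul_sum, ← Finset.sum_add_distrib]
          exact Finset.sum_congr rfl fun t _ => by ring
      _ ≤ l * 1 + m * 1 := by gcongr
      _ = objF K (pInter K N ρ α a (a + 1)) := by
          rw [objF, hsum, hm, hl, hd]
          push_cast
          generalize ((a : ℝ) + 1) / ((a : ℝ) + 1 + 1) = v
          generalize (a : ℝ) / ((a : ℝ) + 1) = u
          field_simp
          ring
end
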